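/- Let a ∈ (0,1), s ∈ ℝ, and b ∈ (0,1/2). There exists a constant C > 0, independent of δ, such that for every δ ∈ (0,1) and every Schwartz function f on ℝ² one has ‖ψ(t/δ) f‖_{X̃^b_s} ≤ C ‖f‖_{X̃^b_s}, where ψ(t/δ) f denotes the function (x,t) ↦ ψ(t/δ) f(x,t). -/

import Mathlib

/-!
By Fourier inversion for `ψ`, multiplication by `ψ(t/δ)` averages the Fourier transform in the time
frequency: `FT2 (ψ(t/δ) f)(ξ, λ) = ∫ ψ̂(v) FT2 f(ξ, λ + r v) dv` with `r = 2π/δ`.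

Put `β = 2b < 1`. The estimate holds because `(1+|z|)^(-β)` is an `A₁`-type weight:
`∫ |ψ̂(v)| (1+|z + r v|)^(-β) dv ≤ M (1+|z|)^(-β)` uniformly in `r ≠ 0` and `z`. Indeed
`(1+|z|)^β ≤ (1+|z + r v|)^β + |r v|^β`, and after division by `(1+|z + r v|)^β` the last term is at
most `|v|^β |v + z/r|^(-β)`, in which `r` survives only as a translation; its integral against the
rapidly decaying `|ψ̂|` is bounded since `β < 1` makes the singularity integrable.

With `z = λ - ω(ξ)`, Cauchy-Schwarz with the weights `(1+|z + r v|)^(∓β)` bounds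
`(1+|z|)^β |FT2 (ψ(t/δ) f)(ξ, λ)|²` by `M ∫ |ψ̂(v)| (1+|z + r v|)^β |FT2 f(ξ, λ + r v)|² dv`, and
Tonelli with translation invariance gives the constant `M ∫ |ψ̂|`. Polynomial growth of `ω` makes
the norm of a Schwartz function finite, so that this bound between lower integrals passes to
Bochner integrals.
-/

open MeasureTheory Complex

noncomputable section

/-- The dispersive symbol `ω(ξ) = ξ |ξ|^(1+a)`. -/
def disp (a ξ : ℝ) : ℝ := ξ * |ξ| ^ (1 + a)

/-- Fourier transform on `ℝ`, convention `f̂(ξ) = ∫ e^{ixξ} f(x) dx`. -/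
def FT1 (f : ℝ → ℂ) (ξ : ℝ) : ℂ :=
  ∫ x : ℝ, Complex.exp (Complex.I * ((x * ξ : ℝ) : ℂ)) * f x

/-- Spacetime Fourier transform, convention `f̂(ξ,λ) = ∫ e^{i(xξ+tλ)} f(x,t) dx dt`,
for `f : ℝ × ℝ → ℂ` with first coordinate `x` (space) and second `t` (time). -/
def FT2 (f : ℝ × ℝ → ℂ) (ξ lam : ℝ) : ℂ :=
  ∫ p : ℝ × ℝ, Complex.exp (Complex.I * ((p.1 * ξ + p.2 * lam : ℝ) : ℂ)) * f p

/-- The dyadic cutoffs `χ_j`: `χ_0 = χ₀` and `χ_j(z) = χ(2^{-j} z)` for `j ≥ 1`. -/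
def chiJ (χ₀ χ : ℝ → ℝ) (j : ℕ) (z : ℝ) : ℝ :=
  if j = 0 then χ₀ z else χ ((2 : ℝ) ^ (-(j : ℝ)) * z)

/-- Hypotheses on the fixed dyadic cutoffs. -/
structure DyadicCutoffs (χ₀ χ : ℝ → ℝ) : Prop where
  smooth0 : ContDiff ℝ (⊤ : ℕ∞) χ₀
  even0 : ∀ z, χ₀ (-z) = χ₀ z
  mem0 : ∀ z, χ₀ z ∈ Set.Icc (0 : ℝ) 1
  supp0 : ∀ z, 2 < |z| → χ₀ z = 0
  one0 : ∀ z, |z| ≤ 1 → χ₀ z = 1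
  smooth1 : ContDiff ℝ (⊤ : ℕ∞) χ
  even1 : ∀ z, χ (-z) = χ z
  mem1 : ∀ z, χ z ∈ Set.Icc (0 : ℝ) 1
  supp1 : ∀ z, χ z ≠ 0 → 1 / 2 < |z| ∧ |z| < 2
  partition : ∀ z, ∑' j : ℕ, chiJ χ₀ χ j z = 1

/-- A smooth time cutoff supported in `[-1,1]`. -/
structure TimeCutoff (ψ : ℝ → ℝ) : Prop where
  smooth : ContDiff ℝ (⊤ : ℕ∞) ψ
  supp : ∀ t, ψ t ≠ 0 → |t| ≤ 1

/-- The norm `‖f‖_{X^b_s}`. -/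
def Xnorm (a : ℝ) (χ₀ χ : ℝ → ℝ) (b s : ℝ) (f : ℝ × ℝ → ℂ) : ℝ :=
  ∑' j : ℕ, (2 : ℝ) ^ ((j : ℝ) * b) *
    (∫ p : ℝ × ℝ, chiJ χ₀ χ j (p.2 - disp a p.1) * (1 + |p.1|) ^ (2 * s) *
      ‖FT2 f p.1 p.2‖ ^ 2) ^ ((1 : ℝ) / 2)

/-- The norm `‖f‖_{Y^b_{s₀,s₁}} = ‖x·f‖_{X^b_{s₀}} + ‖t·f‖_{X^b_{s₁}}`. -/
def Ynorm (a : ℝ) (χ₀ χ : ℝ → ℝ) (b s₀ s₁ : ℝ) (f : ℝ × ℝ → ℂ) : ℝ :=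
  Xnorm a χ₀ χ b s₀ (fun p => (p.1 : ℂ) * f p) +
    Xnorm a χ₀ χ b s₁ (fun p => (p.2 : ℂ) * f p)

/-- The norm `‖f‖_{Z^b_s} = ‖f‖_{X^b_s} + ‖f‖_{Y^b_{s-2s*,s}}`, where `s* = 1/2 + a/2`. -/
def Znorm (a : ℝ) (χ₀ χ : ℝ → ℝ) (b s : ℝ) (f : ℝ × ℝ → ℂ) : ℝ :=
  Xnorm a χ₀ χ b s f + Ynorm a χ₀ χ b (s - 2 * (1 / 2 + a / 2)) s f

/-- The norm `‖f‖_{X̃^b_s}`. -/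
def XtildeNorm (a b s : ℝ) (f : ℝ × ℝ → ℂ) : ℝ :=
  (∫ p : ℝ × ℝ, (1 + |p.2 - disp a p.1|) ^ (2 * b) * (1 + |p.1|) ^ (2 * s) *
    ‖FT2 f p.1 p.2‖ ^ 2) ^ ((1 : ℝ) / 2)

/-- The Sobolev norm `‖g‖_{H^s} = (∫ (1+|ξ|)^{2s} |ĝ(ξ)|² dξ)^{1/2}`. -/
def Hnorm (s : ℝ) (g : ℝ → ℂ) : ℝ :=
  (∫ ξ : ℝ, (1 + |ξ|) ^ (2 * s) * ‖FT1 g ξ‖ ^ 2) ^ ((1 : ℝ) / 2)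

/-- The weighted norm `‖g‖_{F^s} = ‖g‖_{H^s} + ‖x·g‖_{H^{s-2s*}}` (here `sstar = s*`). -/
def Fnorm (sstar s : ℝ) (g : ℝ → ℂ) : ℝ :=
  Hnorm s g + Hnorm (s - 2 * sstar) (fun x => (x : ℂ) * g x)

/-- The `L^p` norm `(∫ ‖f‖^p)^{1/p}`. -/
def Lpnorm {α : Type*} [MeasureSpace α] {E : Type*} [NormedAddCommGroup E]
    (p : ℝ) (f : α → E) : ℝ :=
  (∫ x, ‖f x‖ ^ p) ^ (1 / p)

/-- The linear propagator `W(t)`, defined via Fourier inversion so that its Fourier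
transform in `x` is `e^{itω(ξ)} û₀(ξ)`. -/
def Wgrp (a : ℝ) (u₀ : ℝ → ℂ) (t x : ℝ) : ℂ :=
  ((1 / (2 * Real.pi) : ℝ) : ℂ) *
    ∫ ξ : ℝ, Complex.exp (-(Complex.I * ((x * ξ : ℝ) : ℂ))) *
      (Complex.exp (Complex.I * ((t * disp a ξ : ℝ) : ℂ)) * FT1 u₀ ξ)

/-- The Fourier multiplier `D^σ` with symbol `|ξ|^σ`, via Fourier inversion. -/
def Dop (σ : ℝ) (g : ℝ → ℂ) (x : ℝ) : ℂ :=
  ((1 / (2 * Real.pi) : ℝ) : ℂ) *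
    ∫ ξ : ℝ, Complex.exp (-(Complex.I * ((x * ξ : ℝ) : ℂ))) *
      (((|ξ| ^ σ : ℝ) : ℂ) * FT1 g ξ)

open scoped ENNReal NNReal FourierTransform SchwartzMap

section Averages

variable {V : Type*} [MeasurableSpace V]

lemma sq_lintegral_le_lintegral_inv_mul_lintegral_mul_sq {ν : Measure V} {g w : V → ℝ≥0∞}
    (hg : Measurable g) (hw : Measurable w) (hw₀ : ∀ v, w v ≠ 0) (hw_top : ∀ v, w v ≠ ∞) :
    (∫⁻ v, g v ∂ν) ^ 2 ≤ (∫⁻ v, (w v)⁻¹ ∂ν) * ∫⁻ v, w v * g v ^ 2 ∂ν := by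
  have factor (v : V) : g v = (w v)⁻¹ ^ (2⁻¹ : ℝ) * (w v * g v ^ 2) ^ (2⁻¹ : ℝ) := by
    rw [← ENNReal.mul_rpow_of_nonneg _ _ (by norm_num), ← mul_assoc,
      ENNReal.inv_mul_cancel (hw₀ v) (hw_top v), one_mul]
    exact_mod_cast (ENNReal.pow_rpow_inv_natCast two_ne_zero (g v)).symm
  calc (∫⁻ v, g v ∂ν) ^ 2
      = (∫⁻ v, (w v)⁻¹ ^ (2⁻¹ : ℝ) * (w v * g v ^ 2) ^ (2⁻¹ : ℝ) ∂ν) ^ 2 := by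
        simp only [← factor]
    _ ≤ ((∫⁻ v, (w v)⁻¹ ∂ν) ^ (2⁻¹ : ℝ) * (∫⁻ v, w v * g v ^ 2 ∂ν) ^ (2⁻¹ : ℝ)) ^ 2 := by
        gcongr
        exact ENNReal.lintegral_mul_norm_pow_le hw.inv.aemeasurable
          (hw.mul (hg.pow_const 2)).aemeasurable (by norm_num) (by norm_num) (by norm_num)
    _ = (∫⁻ v, (w v)⁻¹ ∂ν) * ∫⁻ v, w v * g v ^ 2 ∂ν := by
        rw [mul_pow]
        exact_mod_cast congrArg₂ (· * ·) (ENNReal.rpow_inv_natCast_pow two_ne_zero _)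
          (ENNReal.rpow_inv_natCast_pow two_ne_zero _)

variable {G : Type*} [AddGroup G] [MeasurableSpace G] [MeasurableAdd₂ G]

lemma lintegral_weight_mul_sq_average_le (μ : Measure G) [SFinite μ] [μ.IsAddRightInvariant]
    (ν : Measure V) [SFinite ν] {τ : V → G} (hτ : Measurable τ) {w g : G → ℝ≥0∞}
    (hw : Measurable w) (hw₀ : ∀ z, w z ≠ 0) (hw_top : ∀ z, w z ≠ ∞) (hg : Measurable g)
    {M : ℝ≥0∞} (hM : ∀ z, w z * ∫⁻ v, (w (z + τ v))⁻¹ ∂ν ≤ M) :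
    ∫⁻ z, w z * (∫⁻ v, g (z + τ v) ∂ν) ^ 2 ∂μ ≤ M * ν Set.univ * ∫⁻ z, w z * g z ^ 2 ∂μ := by
  set E : G → ℝ≥0∞ := fun z => w z * g z ^ 2
  have hE : Measurable E := by fun_prop
  have pointwise (z : G) : w z * (∫⁻ v, g (z + τ v) ∂ν) ^ 2 ≤ M * ∫⁻ v, E (z + τ v) ∂ν :=
    calc w z * (∫⁻ v, g (z + τ v) ∂ν) ^ 2
        ≤ w z * ((∫⁻ v, (w (z + τ v))⁻¹ ∂ν) * ∫⁻ v, E (z + τ v) ∂ν) := by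
          gcongr
          exact sq_lintegral_le_lintegral_inv_mul_lintegral_mul_sq (by fun_prop) (by fun_prop)
            (fun v => hw₀ _) fun v => hw_top _
      _ = (w z * ∫⁻ v, (w (z + τ v))⁻¹ ∂ν) * ∫⁻ v, E (z + τ v) ∂ν := (mul_assoc _ _ _).symm
      _ ≤ M * ∫⁻ v, E (z + τ v) ∂ν := by gcongr; exact hM z
  calc ∫⁻ z, w z * (∫⁻ v, g (z + τ v) ∂ν) ^ 2 ∂μ
      ≤ ∫⁻ z, M * ∫⁻ v, E (z + τ v) ∂ν ∂μ := lintegral_mono pointwise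
    _ = M * ∫⁻ z, ∫⁻ v, E (z + τ v) ∂ν ∂μ :=
        lintegral_const_mul _ (Measurable.lintegral_prod_right' (f := fun q : G × V =>
          E (q.1 + τ q.2)) (by fun_prop))
    _ = M * ∫⁻ v, ∫⁻ z, E (z + τ v) ∂μ ∂ν := by
        rw [lintegral_lintegral_swap (by fun_prop)]
    _ = M * ν Set.univ * ∫⁻ z, E z ∂μ := by
        simp only [lintegral_add_right_eq_self E, lintegral_const]
        ring

end Averages

section PowerWeight

variable {E : Type*} [NormedAddCommGroup E] {β : ℝ}

lemma lintegral_mul_inv_enorm_add_rpow_le [MeasurableSpace E] [BorelSpace E]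
    (μ : Measure E) [μ.IsAddRightInvariant] (hβ : 0 ≤ β) {k : E → ℝ≥0∞} {A : ℝ≥0∞}
    (hA : ∀ v, k v ≤ A) (y : E) :
    ∫⁻ v, k v * (‖v + y‖ₑ ^ β)⁻¹ ∂μ ≤
      ∫⁻ v, k v ∂μ + A * ∫⁻ x in Metric.ball 0 1, (‖x‖ₑ ^ β)⁻¹ ∂μ := by
  set S : E → ℝ≥0∞ := (Metric.ball 0 1).indicator fun x => (‖x‖ₑ ^ β)⁻¹
  have hS : Measurable S := Measurable.indicator (by fun_prop) measurableSet_ball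
  have near_or_far (v : E) : k v * (‖v + y‖ₑ ^ β)⁻¹ ≤ k v + A * S (v + y) := by
    by_cases near : v + y ∈ Metric.ball 0 1
    · rw [show S (v + y) = (‖v + y‖ₑ ^ β)⁻¹ from Set.indicator_of_mem near _]
      exact le_add_left (by gcongr; exact hA v)
    · have far : 1 ≤ ‖v + y‖ₑ := by
        rw [← ofReal_norm, ENNReal.one_le_ofReal]
        simpa using near
      have inv_le_one : (‖v + y‖ₑ ^ β)⁻¹ ≤ 1 :=
        ENNReal.inv_le_one.2 (by simpa using ENNReal.rpow_le_rpow far hβ)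
      exact le_add_right (mul_le_of_le_one_right' inv_le_one)
  calc ∫⁻ v, k v * (‖v + y‖ₑ ^ β)⁻¹ ∂μ ≤ ∫⁻ v, k v + A * S (v + y) ∂μ :=
        lintegral_mono near_or_far
    _ = ∫⁻ v, k v ∂μ + A * ∫⁻ x in Metric.ball 0 1, (‖x‖ₑ ^ β)⁻¹ ∂μ := by
        rw [lintegral_add_right _ (by fun_prop), lintegral_const_mul _ (by fun_prop),
          lintegral_add_right_eq_self S, lintegral_indicator measurableSet_ball]

variable [NormedSpace ℝ E]

lemma one_add_enorm_rpow_mul_inv_le (hβ₀ : 0 ≤ β) (hβ₁ : β ≤ 1) {r : ℝ} (hr : r ≠ 0) (z v : E) :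
    (1 + ‖z‖ₑ) ^ β * ((1 + ‖z + r • v‖ₑ) ^ β)⁻¹ ≤
      1 + ‖v‖ₑ ^ β * (‖v + r⁻¹ • z‖ₑ ^ β)⁻¹ := by
  -- The right side is infinite at the singular point `v = -r⁻¹ • z` (if `0 < β` and `z ≠ 0`), so
  -- in `ℝ≥0∞` that point needs no exclusion.
  set W : ℝ≥0∞ := (1 + ‖z + r • v‖ₑ) ^ β
  have hr_top : ‖r‖ₑ ^ β ≠ ∞ := by finiteness
  have hr_zero : ‖r‖ₑ ^ β ≠ 0 := by simp [hr]
  have subadditive : (1 + ‖z‖ₑ) ^ β ≤ W + ‖r‖ₑ ^ β * ‖v‖ₑ ^ β :=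
    calc (1 + ‖z‖ₑ) ^ β = (1 + ‖z + r • v - r • v‖ₑ) ^ β := by rw [add_sub_cancel_right]
      _ ≤ (1 + (‖z + r • v‖ₑ + ‖r • v‖ₑ)) ^ β := by
          exact ENNReal.rpow_le_rpow (add_le_add_right enorm_sub_le 1) hβ₀
      _ ≤ W + ‖r • v‖ₑ ^ β := by
          rw [← add_assoc]
          exact ENNReal.rpow_add_le_add_rpow _ _ hβ₀ hβ₁
      _ = W + ‖r‖ₑ ^ β * ‖v‖ₑ ^ β := by rw [enorm_smul, ENNReal.mul_rpow_of_nonneg _ _ hβ₀]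
  have singular_bound : ‖r‖ₑ ^ β * ‖v + r⁻¹ • z‖ₑ ^ β ≤ W :=
    calc ‖r‖ₑ ^ β * ‖v + r⁻¹ • z‖ₑ ^ β = ‖z + r • v‖ₑ ^ β := by
          rw [← ENNReal.mul_rpow_of_nonneg _ _ hβ₀, ← enorm_smul, smul_add, smul_inv_smul₀ hr,
            add_comm]
      _ ≤ W := by
          exact ENNReal.rpow_le_rpow le_add_self hβ₀
  calc (1 + ‖z‖ₑ) ^ β * W⁻¹ ≤ (W + ‖r‖ₑ ^ β * ‖v‖ₑ ^ β) * W⁻¹ := by gcongr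
    _ = W * W⁻¹ + ‖r‖ₑ ^ β * ‖v‖ₑ ^ β * W⁻¹ := add_mul _ _ _
    _ ≤ 1 + ‖r‖ₑ ^ β * ‖v‖ₑ ^ β * (‖r‖ₑ ^ β * ‖v + r⁻¹ • z‖ₑ ^ β)⁻¹ := by
        gcongr
        exact ENNReal.mul_inv_le_one W
    _ = 1 + ‖r‖ₑ ^ β * (‖r‖ₑ ^ β)⁻¹ * (‖v‖ₑ ^ β * (‖v + r⁻¹ • z‖ₑ ^ β)⁻¹) := by
        rw [ENNReal.mul_inv (.inl hr_zero) (.inl hr_top)]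
        ring
    _ = 1 + ‖v‖ₑ ^ β * (‖v + r⁻¹ • z‖ₑ ^ β)⁻¹ := by
        rw [ENNReal.mul_inv_cancel hr_zero hr_top, one_mul]

variable [MeasurableSpace E] [BorelSpace E] (μ : Measure E)

lemma lintegral_ball_inv_enorm_rpow_lt_top [FiniteDimensional ℝ E] [μ.IsAddHaarMeasure]
    [Nontrivial E] (hβ : β < Module.finrank ℝ E) :
    ∫⁻ x in Metric.ball 0 1, (‖x‖ₑ ^ β)⁻¹ ∂μ < ∞ := by
  have integrable : IntegrableOn (fun x : E => ‖x‖ ^ (-β)) (Metric.ball 0 1) μ :=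
    integrableOn_ball_of_norm_le_rpow (C := 1) Module.finrank_pos hβ
      (.of_forall fun x => by rw [Real.norm_of_nonneg (by positivity), one_mul])
      (by fun_prop : Measurable fun x : E => ‖x‖ ^ (-β)).aestronglyMeasurable
  refine lt_of_eq_of_lt (lintegral_congr_ae ?_) integrable.hasFiniteIntegral
  filter_upwards [ae_restrict_of_ae (Measure.ae_ne μ 0)] with x hx
  rw [Real.enorm_of_nonneg (by positivity), ← ENNReal.ofReal_rpow_of_pos (norm_pos_iff.2 hx),
    ofReal_norm, ENNReal.rpow_neg]

lemma one_add_enorm_rpow_mul_lintegral_inv_le [μ.IsAddRightInvariant] (hβ₀ : 0 ≤ β) (hβ₁ : β ≤ 1)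
    {h : E → ℝ≥0∞} (hh : Measurable h) {A : ℝ≥0∞} (hA : ∀ v, h v * ‖v‖ₑ ^ β ≤ A)
    {r : ℝ} (hr : r ≠ 0) (z : E) :
    (1 + ‖z‖ₑ) ^ β * ∫⁻ v, h v * ((1 + ‖z + r • v‖ₑ) ^ β)⁻¹ ∂μ ≤
      ∫⁻ v, h v ∂μ + (∫⁻ v, h v * ‖v‖ₑ ^ β ∂μ +
        A * ∫⁻ x in Metric.ball 0 1, (‖x‖ₑ ^ β)⁻¹ ∂μ) := by
  calc (1 + ‖z‖ₑ) ^ β * ∫⁻ v, h v * ((1 + ‖z + r • v‖ₑ) ^ β)⁻¹ ∂μ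
      = ∫⁻ v, h v * ((1 + ‖z‖ₑ) ^ β * ((1 + ‖z + r • v‖ₑ) ^ β)⁻¹) ∂μ := by
        rw [← lintegral_const_mul' _ _ (by finiteness)]
        simp only [mul_left_comm]
    _ ≤ ∫⁻ v, h v * (1 + ‖v‖ₑ ^ β * (‖v + r⁻¹ • z‖ₑ ^ β)⁻¹) ∂μ := by
        gcongr with v
        exact one_add_enorm_rpow_mul_inv_le hβ₀ hβ₁ hr z v
    _ = ∫⁻ v, h v ∂μ + ∫⁻ v, h v * ‖v‖ₑ ^ β * (‖v + r⁻¹ • z‖ₑ ^ β)⁻¹ ∂μ := by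
        simp only [mul_add, mul_one, ← mul_assoc]
        exact lintegral_add_left hh _
    _ ≤ _ := by
        gcongr
        exact lintegral_mul_inv_enorm_add_rpow_le μ hβ₀ hA _

end PowerWeight

/-- Polynomial growth: temperate growth without any smoothness. It is what a dispersion relation
or a weight needs in order for weighted integrals of Schwartz functions to converge. -/
def HasPolynomialGrowth {E F : Type*} [NormedAddCommGroup E] [NormedAddCommGroup F]
    (f : E → F) : Prop :=
  ∃ n : ℕ, f =O[⊤] fun x => (1 + ‖x‖) ^ n

namespace HasPolynomialGrowth

variable {E F : Type*} [NormedAddCommGroup E] [NormedAddCommGroup F]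

lemma of_norm_le_one_add_rpow {f : E → F} {t : ℝ} (hf : ∀ x, ‖f x‖ ≤ (1 + ‖x‖) ^ t) :
    HasPolynomialGrowth f :=
  ⟨⌈t⌉₊, .of_norm_le fun x => (hf x).trans <| by
    rw [← Real.rpow_natCast]
    exact Real.rpow_le_rpow_of_exponent_le (by linarith [norm_nonneg x]) (Nat.le_ceil t)⟩

lemma sub {f g : E → F} (hf : HasPolynomialGrowth f) (hg : HasPolynomialGrowth g) :
    HasPolynomialGrowth fun x => f x - g x := by
  obtain ⟨m, hm⟩ := hf
  obtain ⟨n, hn⟩ := hg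
  have pow_isBigO_pow {k : ℕ} (hk : k ≤ max m n) :
      (fun x : E => (1 + ‖x‖) ^ k) =O[⊤] fun x => (1 + ‖x‖) ^ max m n :=
    .of_norm_le fun x => by
      rw [Real.norm_of_nonneg (by positivity)]
      gcongr
      linarith [norm_nonneg x]
  exact ⟨max m n, (hm.trans (pow_isBigO_pow (le_max_left m n))).sub
    (hn.trans (pow_isBigO_pow (le_max_right m n)))⟩

lemma mul {f g : E → ℝ} (hf : HasPolynomialGrowth f) (hg : HasPolynomialGrowth g) :
    HasPolynomialGrowth fun x => f x * g x := by
  obtain ⟨m, hm⟩ := hf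
  obtain ⟨n, hn⟩ := hg
  exact ⟨m + n, by simpa only [pow_add] using hm.mul hn⟩

lemma one_add_norm_rpow {f : E → F} (hf : HasPolynomialGrowth f) (t : ℝ) :
    HasPolynomialGrowth fun x => (1 + ‖f x‖) ^ t := by
  obtain ⟨n, hn⟩ := hf
  have one_isBigO : (fun _ : E => (1 : ℝ)) =O[⊤] fun x => (1 + ‖x‖) ^ n :=
    .of_norm_le fun x => by
      rw [norm_one]
      exact one_le_pow₀ (by linarith [norm_nonneg x])
  refine ⟨n * ⌈t⌉₊, .trans (.of_norm_le fun x => ?_)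
    (by simpa only [pow_mul] using (one_isBigO.add hn.norm_left).pow ⌈t⌉₊)⟩
  rw [Real.norm_of_nonneg (by positivity), ← Real.rpow_natCast]
  exact Real.rpow_le_rpow_of_exponent_le (by linarith [norm_nonneg (f x)]) (Nat.le_ceil t)

variable [NormedSpace ℝ E] [NormedSpace ℝ F]

lemma mul_norm_schwartz_isBigO {w : E → ℝ} (hw : HasPolynomialGrowth w) (Φ : 𝓢(E, F)) (k : ℕ) :
    (fun x => w x * ‖Φ x‖) =O[⊤] fun x => (1 + ‖x‖) ^ (-(k : ℝ)) := by
  obtain ⟨n, hn⟩ := hw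
  obtain ⟨C, hC⟩ : ∃ C, ∀ x, (1 + ‖x‖) ^ (n + k) * ‖Φ x‖ ≤ C := ⟨_, fun x => by
    simpa using
      SchwartzMap.one_add_le_sup_seminorm_apply (𝕜 := ℝ) (m := (n + k, 0)) le_rfl le_rfl Φ x⟩
  have schwartz_decay : (fun x => ‖Φ x‖) =O[⊤] fun x => ((1 + ‖x‖) ^ (n + k))⁻¹ := by
    refine Asymptotics.isBigO_top.2 ⟨C, fun x => ?_⟩
    rw [norm_norm, Real.norm_of_nonneg (by positivity), ← div_eq_mul_inv,
      le_div_iff₀' (by positivity)]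
    exact hC x
  refine (hn.mul schwartz_decay).congr_right fun x => ?_
  have : 1 + ‖x‖ ≠ 0 := by positivity
  rw [Real.rpow_neg (by positivity), Real.rpow_natCast, pow_add]
  field_simp

lemma exists_abs_mul_norm_schwartz_le {w : E → ℝ} (hw : HasPolynomialGrowth w) (Φ : 𝓢(E, F)) :
    ∃ A, ∀ x, |w x| * ‖Φ x‖ ≤ A := by
  obtain ⟨A, hA⟩ := Asymptotics.isBigO_top.1 (hw.mul_norm_schwartz_isBigO Φ 0)
  exact ⟨A, by simpa using hA⟩

variable [MeasurableSpace E] [BorelSpace E]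

lemma integrable_mul_norm_schwartz {w : E → ℝ} (hw : HasPolynomialGrowth w) (hwm : Measurable w)
    (Φ : 𝓢(E, F)) (μ : Measure E) [μ.HasTemperateGrowth] :
    Integrable (fun x => w x * ‖Φ x‖) μ := by
  obtain ⟨C, hC⟩ := Asymptotics.isBigO_top.1 (hw.mul_norm_schwartz_isBigO Φ μ.integrablePower)
  exact ((μ.integrable_pow_neg_integrablePower.norm).const_mul C).mono'
    (hwm.aestronglyMeasurable.mul Φ.continuous.norm.aestronglyMeasurable) (.of_forall hC)

lemma integrable_mul_sq_norm_schwartz {w : E → ℝ} (hw : HasPolynomialGrowth w) (hwm : Measurable w)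
    (Φ : 𝓢(E, F)) (μ : Measure E) [μ.HasTemperateGrowth] :
    Integrable (fun x => w x * ‖Φ x‖ ^ 2) μ := by
  simp only [sq, ← mul_assoc]
  refine (hw.integrable_mul_norm_schwartz hwm Φ μ).mul_bdd (c := ‖Φ.toBoundedContinuousFunction‖)
    Φ.continuous.norm.aestronglyMeasurable (.of_forall fun x => ?_)
  rw [norm_norm]
  exact Φ.toBoundedContinuousFunction.norm_coe_le_norm x

end HasPolynomialGrowth

lemma hasPolynomialGrowth_fst : HasPolynomialGrowth (Prod.fst : ℝ × ℝ → ℝ) :=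
  .of_norm_le_one_add_rpow (t := 1) fun p => by
    rw [Real.rpow_one]
    linarith [norm_fst_le p]

lemma hasPolynomialGrowth_snd : HasPolynomialGrowth (Prod.snd : ℝ × ℝ → ℝ) :=
  .of_norm_le_one_add_rpow (t := 1) fun p => by
    rw [Real.rpow_one]
    linarith [norm_snd_le p]

lemma HasPolynomialGrowth.comp_fst {ω : ℝ → ℝ} (hω : HasPolynomialGrowth ω) :
    HasPolynomialGrowth fun p : ℝ × ℝ => ω p.1 := by
  obtain ⟨n, hn⟩ := hω
  refine ⟨n, (hn.comp_tendsto (Filter.tendsto_top (f := Prod.fst))).trans (.of_norm_le fun p => ?_)⟩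
  rw [Function.comp_apply, Real.norm_of_nonneg (by positivity)]
  gcongr
  exact norm_fst_le p

lemma hasPolynomialGrowth_disp {a : ℝ} (ha : -2 ≤ a) : HasPolynomialGrowth (disp a) := by
  refine .of_norm_le_one_add_rpow (t := 2 + a) fun ξ => ?_
  rcases eq_or_ne ξ 0 with rfl | hξ
  · simp [disp]
  calc ‖disp a ξ‖ = |ξ| ^ (1 : ℝ) * |ξ| ^ (1 + a) := by
        rw [disp, norm_mul, Real.norm_eq_abs, Real.norm_of_nonneg (by positivity), Real.rpow_one]
    _ = |ξ| ^ (2 + a) := by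
        rw [← Real.rpow_add (abs_pos.2 hξ)]
        ring_nf
    _ ≤ (1 + ‖ξ‖) ^ (2 + a) :=
        Real.rpow_le_rpow (abs_nonneg ξ) (le_add_of_nonneg_left zero_le_one) (by linarith)

lemma measurable_disp (a : ℝ) : Measurable (disp a) := by
  unfold disp
  fun_prop

lemma exists_one_add_enorm_rpow_mul_lintegral_schwartz_le {E F : Type*} [NormedAddCommGroup E]
    [NormedSpace ℝ E] [FiniteDimensional ℝ E] [Nontrivial E] [MeasurableSpace E] [BorelSpace E]
    [NormedAddCommGroup F] [NormedSpace ℝ F] (μ : Measure E) [μ.IsAddHaarMeasure]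
    (Φ : 𝓢(E, F)) {β : ℝ} (hβ₀ : 0 ≤ β) (hβ₁ : β ≤ 1) (hβ : β < Module.finrank ℝ E) :
    ∃ M : ℝ≥0, ∀ r : ℝ, r ≠ 0 → ∀ z,
      (1 + ‖z‖ₑ) ^ β * ∫⁻ v, ‖Φ v‖ₑ * ((1 + ‖z + r • v‖ₑ) ^ β)⁻¹ ∂μ ≤ M := by
  have growth : HasPolynomialGrowth fun v : E => ‖v‖ ^ β :=
    .of_norm_le_one_add_rpow fun v => by
      rw [Real.norm_of_nonneg (by positivity)]
      exact Real.rpow_le_rpow (norm_nonneg v) (le_add_of_nonneg_left zero_le_one) hβ₀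
  have enorm_eq (v : E) : ‖Φ v‖ₑ * ‖v‖ₑ ^ β = ‖‖v‖ ^ β * ‖Φ v‖‖ₑ := by
    rw [enorm_mul, enorm_norm, Real.enorm_rpow_of_nonneg (norm_nonneg v) hβ₀, enorm_norm, mul_comm]
  obtain ⟨A, hA⟩ := growth.exists_abs_mul_norm_schwartz_le Φ
  have bounded (v : E) : ‖Φ v‖ₑ * ‖v‖ₑ ^ β ≤ ENNReal.ofReal A := by
    rw [enorm_eq, ← ofReal_norm, norm_mul, norm_norm]
    exact ENNReal.ofReal_le_ofReal (hA v)
  have integral_lt_top : ∫⁻ v, ‖Φ v‖ₑ ∂μ < ∞ := Φ.integrable.hasFiniteIntegral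
  have moment_lt_top : ∫⁻ v, ‖Φ v‖ₑ * ‖v‖ₑ ^ β ∂μ < ∞ := by
    simp only [enorm_eq]
    exact (growth.integrable_mul_norm_schwartz (by fun_prop) Φ μ).hasFiniteIntegral
  have ball_lt_top := lintegral_ball_inv_enorm_rpow_lt_top μ hβ
  have total_ne_top : ∫⁻ v, ‖Φ v‖ₑ ∂μ + (∫⁻ v, ‖Φ v‖ₑ * ‖v‖ₑ ^ β ∂μ +
      ENNReal.ofReal A * ∫⁻ x in Metric.ball 0 1, (‖x‖ₑ ^ β)⁻¹ ∂μ) ≠ ∞ := by finiteness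
  exact ⟨_, fun r hr z => (one_add_enorm_rpow_mul_lintegral_inv_le μ hβ₀ hβ₁
    Φ.continuous.enorm.measurable bounded hr z).trans_eq (ENNReal.coe_toNNReal total_ne_top).symm⟩

section BourgainNorm

/-- The weight of the Bourgain space with dispersion relation `ω`, modulation exponent `b` and
Sobolev exponent `s`. It is squared: it multiplies `‖FT2 f‖ ^ 2`. -/
def bourgainWeight (ω : ℝ → ℝ) (b s : ℝ) (p : ℝ × ℝ) : ℝ :=
  (1 + |p.2 - ω p.1|) ^ (2 * b) * (1 + |p.1|) ^ (2 * s)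

/-- The Bourgain norm with a general dispersion relation `ω` in place of `disp a`. Like
`XtildeNorm` it is a Bochner integral, so it is `0` rather than infinite when that diverges. -/
def bourgainNorm (ω : ℝ → ℝ) (b s : ℝ) (f : ℝ × ℝ → ℂ) : ℝ :=
  (∫ p : ℝ × ℝ, bourgainWeight ω b s p * ‖FT2 f p.1 p.2‖ ^ 2) ^ ((1 : ℝ) / 2)

lemma XtildeNorm_eq_bourgainNorm (a b s : ℝ) : XtildeNorm a b s = bourgainNorm (disp a) b s := rfl

variable {ω : ℝ → ℝ} {b s : ℝ}

lemma bourgainWeight_pos (p : ℝ × ℝ) : 0 < bourgainWeight ω b s p := by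
  unfold bourgainWeight
  positivity

lemma measurable_bourgainWeight (hω : Measurable ω) : Measurable (bourgainWeight ω b s) := by
  unfold bourgainWeight
  fun_prop

lemma hasPolynomialGrowth_bourgainWeight (hω : HasPolynomialGrowth ω) :
    HasPolynomialGrowth (bourgainWeight ω b s) :=
  ((hasPolynomialGrowth_snd.sub hω.comp_fst).one_add_norm_rpow (2 * b)).mul
    (hasPolynomialGrowth_fst.one_add_norm_rpow (2 * s))

lemma enorm_one_add_abs_rpow (x t : ℝ) : ‖(1 + |x|) ^ t‖ₑ = (1 + ‖x‖ₑ) ^ t := by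
  rw [Real.enorm_of_nonneg (by positivity), ← ENNReal.ofReal_rpow_of_pos (by positivity),
    ENNReal.ofReal_add zero_le_one (abs_nonneg x), ENNReal.ofReal_one, Real.enorm_eq_ofReal_abs]

lemma enorm_bourgainWeight_mul_inv_time_shift (p : ℝ × ℝ) (h : ℝ) :
    ‖bourgainWeight ω b s p‖ₑ * ‖bourgainWeight ω b s (p + (0, h))‖ₑ⁻¹ =
      (1 + ‖p.2 - ω p.1‖ₑ) ^ (2 * b) * ((1 + ‖p.2 - ω p.1 + h‖ₑ) ^ (2 * b))⁻¹ := by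
  have quotient : bourgainWeight ω b s p / bourgainWeight ω b s (p + (0, h)) =
      (1 + |p.2 - ω p.1|) ^ (2 * b) / (1 + |p.2 - ω p.1 + h|) ^ (2 * b) := by
    simp only [bourgainWeight, Prod.fst_add, Prod.snd_add, add_zero, sub_add_eq_add_sub]
    exact mul_div_mul_right _ _ (by positivity)
  rw [← enorm_inv (bourgainWeight_pos _).ne', ← enorm_mul, ← div_eq_mul_inv, quotient,
    div_eq_mul_inv, enorm_mul, enorm_inv (by positivity), enorm_one_add_abs_rpow,
    enorm_one_add_abs_rpow]

lemma exists_lintegral_bourgainWeight_mul_sq_average_le {F : Type*} [NormedAddCommGroup F]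
    [NormedSpace ℝ F] (hb : b ∈ Set.Ico 0 (1 / 2)) (Φ : 𝓢(ℝ, F)) :
    ∃ K : ℝ≥0, ∀ ω : ℝ → ℝ, Measurable ω → ∀ s r : ℝ, r ≠ 0 →
      ∀ g : ℝ × ℝ → ℝ≥0∞, Measurable g →
        ∫⁻ p, ‖bourgainWeight ω b s p‖ₑ * (∫⁻ v, ‖Φ v‖ₑ * g (p + (0, r * v))) ^ 2 ≤
          K * ∫⁻ p, ‖bourgainWeight ω b s p‖ₑ * g p ^ 2 := by
  obtain ⟨M, hM⟩ := exists_one_add_enorm_rpow_mul_lintegral_schwartz_le volume Φ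
    (β := 2 * b) (by linarith [hb.1]) (by linarith [hb.2])
    (by rw [Module.finrank_self]; push_cast; linarith [hb.2])
  set ν : Measure ℝ := volume.withDensity fun v => ‖Φ v‖ₑ
  have hΦ : Measurable fun v => ‖Φ v‖ₑ := Φ.continuous.enorm.measurable
  have lintegral_ν {k : ℝ → ℝ≥0∞} (hk : Measurable k) : ∫⁻ v, k v ∂ν = ∫⁻ v, ‖Φ v‖ₑ * k v :=
    lintegral_withDensity_eq_lintegral_mul volume hΦ hk
  have : IsFiniteMeasure ν := isFiniteMeasure_withDensity Φ.integrable.hasFiniteIntegral.ne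
  refine ⟨M * (ν Set.univ).toNNReal, fun ω hω s r hr g hg => ?_⟩
  have hw : Measurable (bourgainWeight ω b s) := measurable_bourgainWeight hω
  have average_inv_weight_le (p : ℝ × ℝ) : ‖bourgainWeight ω b s p‖ₑ *
      ∫⁻ v, ‖bourgainWeight ω b s (p + (0, r * v))‖ₑ⁻¹ ∂ν ≤ M := by
    rw [← lintegral_const_mul' _ _ enorm_ne_top]
    simp only [enorm_bourgainWeight_mul_inv_time_shift]
    rw [lintegral_const_mul' _ _ (by finiteness), lintegral_ν (by fun_prop)]
    exact hM r hr _
  have weighted := lintegral_weight_mul_sq_average_le volume ν (τ := fun v => (0, r * v))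
    (by fun_prop) hw.enorm (fun p => enorm_ne_zero.2 (bourgainWeight_pos p).ne')
    (fun p => enorm_ne_top) hg average_inv_weight_le
  rw [ENNReal.coe_mul, ENNReal.coe_toNNReal (measure_ne_top ν _)]
  refine (lintegral_congr fun p => ?_).trans_le weighted
  rw [lintegral_ν (by fun_prop)]

end BourgainNorm

section SpacetimeFourier

lemma exists_schwartz_FT2 (f : 𝓢(ℝ × ℝ, ℂ)) :
    ∃ Φ : 𝓢(ℝ × ℝ, ℂ), ∀ p : ℝ × ℝ, Φ p = FT2 f p.1 p.2 := by
  -- Mathlib's Fourier transform needs an inner product space, so `f` is transported to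
  -- `WithLp 2 (ℝ × ℝ)`; the change of convention is the dilation by `-1/(2π)`.
  set c : ℝˣ := Units.mk0 (-(2 * Real.pi)⁻¹) (by simp [Real.pi_ne_zero])
  set toWithLp := (WithLp.prodContinuousLinearEquiv 2 ℝ ℝ ℝ).symm
  set F : 𝓢(WithLp 2 (ℝ × ℝ), ℂ) :=
    SchwartzMap.compCLMOfContinuousLinearEquiv ℂ toWithLp.symm f
  have phase_eq (x : WithLp 2 (ℝ × ℝ)) (p : ℝ × ℝ) :
      -2 * Real.pi * inner ℝ x (c • toWithLp p) = x.fst * p.1 + x.snd * p.2 := by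
    rw [Units.smul_def, inner_smul_right, WithLp.prod_inner_apply]
    simp only [c, toWithLp, Units.val_mk0, WithLp.prodContinuousLinearEquiv_symm_apply,
      Real.inner_apply, WithLp.ofLp_fst, WithLp.ofLp_snd]
    field_simp
  refine ⟨SchwartzMap.compCLMOfContinuousLinearEquiv ℂ
    (toWithLp.trans (ContinuousLinearEquiv.smulLeft c)) (𝓕 F), fun p => ?_⟩
  rw [SchwartzMap.compCLMOfContinuousLinearEquiv_apply, SchwartzMap.fourier_coe,
    Function.comp_apply, Real.fourier_eq', FT2,
    ← (WithLp.volume_preserving_symm_measurableEquiv_toLp_prod ℝ ℝ).integral_comp']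
  refine integral_congr_ae (.of_forall fun x => ?_)
  simp only [ContinuousLinearEquiv.trans_apply, ContinuousLinearEquiv.smulLeft_apply_apply,
    phase_eq, smul_eq_mul, mul_comm I]
  rfl

lemma schwartz_eq_integral_exp_mul_fourier (ψ : 𝓢(ℝ, ℂ)) (t : ℝ) :
    ψ t = ∫ v, cexp (I * (2 * Real.pi * v * t : ℝ)) * (𝓕 ψ : 𝓢(ℝ, ℂ)) v := by
  have inversion : 𝓕⁻ (𝓕 ψ) = ψ := FourierTransform.fourierInv_fourier_eq ψ
  conv_lhs => rw [← inversion, SchwartzMap.fourierInv_coe, Real.fourierInv_eq']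
  refine integral_congr_ae (.of_forall fun v => ?_)
  simp only [smul_eq_mul, Real.inner_apply]
  congr 2
  push_cast
  ring

lemma FT2_time_dilate_mul (ψ : 𝓢(ℝ, ℂ)) {f : ℝ × ℝ → ℂ} (hf : Integrable f) (δ ξ lam : ℝ) :
    FT2 (fun p => ψ (p.2 / δ) * f p) ξ lam =
      ∫ v, (𝓕 ψ : 𝓢(ℝ, ℂ)) v * FT2 f ξ (lam + 2 * Real.pi / δ * v) := by
  set e : ℝ × ℝ → ℝ → ℂ := fun p l => cexp (I * (p.1 * ξ + p.2 * l : ℝ))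
  have character_shift (p : ℝ × ℝ) (v : ℝ) : e p (lam + 2 * Real.pi / δ * v) =
      e p lam * cexp (I * (2 * Real.pi * v * (p.2 / δ) : ℝ)) := by
    simp only [e, ← Complex.exp_add]
    congr 1
    push_cast
    ring
  have product_integrable : Integrable (Function.uncurry fun (p : ℝ × ℝ) v =>
      (𝓕 ψ : 𝓢(ℝ, ℂ)) v * (e p (lam + 2 * Real.pi / δ * v) * f p)) (volume.prod volume) := by
    have hψ : Integrable (𝓕 ψ : 𝓢(ℝ, ℂ)) := (𝓕 ψ).integrable
    refine ((hf.mul_prod hψ).bdd_mul (c := 1)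
      (f := fun z : (ℝ × ℝ) × ℝ => e z.1 (lam + 2 * Real.pi / δ * z.2))
      (by fun_prop : Continuous _).aestronglyMeasurable (.of_forall fun z => ?_)).congr
      (.of_forall fun z => ?_)
    · exact (Complex.norm_exp_I_mul_ofReal _).le
    · simp only [Function.uncurry_def]
      ring
  calc FT2 (fun p => ψ (p.2 / δ) * f p) ξ lam
      = ∫ p : ℝ × ℝ, ∫ v, (𝓕 ψ : 𝓢(ℝ, ℂ)) v * (e p (lam + 2 * Real.pi / δ * v) * f p) := by
        refine integral_congr_ae (.of_forall fun p => ?_)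
        simp only [character_shift, schwartz_eq_integral_exp_mul_fourier ψ (p.2 / δ)]
        rw [← integral_mul_const, ← integral_const_mul]
        refine integral_congr_ae (.of_forall fun v => ?_)
        simp only [e]
        ring
    _ = ∫ v, ∫ p : ℝ × ℝ, (𝓕 ψ : 𝓢(ℝ, ℂ)) v * (e p (lam + 2 * Real.pi / δ * v) * f p) :=
        integral_integral_swap product_integrable
    _ = ∫ v, (𝓕 ψ : 𝓢(ℝ, ℂ)) v * FT2 f ξ (lam + 2 * Real.pi / δ * v) := by
        simp only [integral_const_mul]
        rfl

end SpacetimeFourier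

section CutoffEstimate

variable {ω : ℝ → ℝ} {b s : ℝ}

lemma integrable_bourgainWeight_mul_sq_norm_FT2 (hωm : Measurable ω) (hω : HasPolynomialGrowth ω)
    (f : 𝓢(ℝ × ℝ, ℂ)) :
    Integrable fun p : ℝ × ℝ => bourgainWeight ω b s p * ‖FT2 f p.1 p.2‖ ^ 2 := by
  obtain ⟨Φ, hΦ⟩ := exists_schwartz_FT2 f
  simp only [← hΦ]
  exact (hasPolynomialGrowth_bourgainWeight hω).integrable_mul_sq_norm_schwartz
    (measurable_bourgainWeight hωm) Φ volume

lemma bourgainNorm_le_of_lintegral_le {f g : ℝ × ℝ → ℂ} {K : ℝ≥0}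
    (hg : Integrable fun p : ℝ × ℝ => bourgainWeight ω b s p * ‖FT2 g p.1 p.2‖ ^ 2)
    (h : ∫⁻ p, ‖bourgainWeight ω b s p‖ₑ * ‖FT2 f p.1 p.2‖ₑ ^ 2 ≤
      K * ∫⁻ p, ‖bourgainWeight ω b s p‖ₑ * ‖FT2 g p.1 p.2‖ₑ ^ 2) :
    bourgainNorm ω b s f ≤ (K : ℝ) ^ ((1 : ℝ) / 2) * bourgainNorm ω b s g := by
  set D : (ℝ × ℝ → ℂ) → ℝ × ℝ → ℝ := fun u p => bourgainWeight ω b s p * ‖FT2 u p.1 p.2‖ ^ 2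
  have D_nonneg (u : ℝ × ℝ → ℂ) (p : ℝ × ℝ) : 0 ≤ D u p :=
    mul_nonneg (bourgainWeight_pos p).le (by positivity)
  have enorm_D (u : ℝ × ℝ → ℂ) (p : ℝ × ℝ) :
      ‖D u p‖ₑ = ‖bourgainWeight ω b s p‖ₑ * ‖FT2 u p.1 p.2‖ₑ ^ 2 := by
    rw [enorm_mul, enorm_pow, enorm_norm]
  have energy_nonneg : 0 ≤ ∫ p, D g p := integral_nonneg (D_nonneg g)
  have energy_le : ∫ p, D f p ≤ K * ∫ p, D g p := by
    rw [← ENNReal.ofReal_le_ofReal_iff (mul_nonneg K.coe_nonneg energy_nonneg)]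
    calc ENNReal.ofReal (∫ p, D f p) = ‖∫ p, D f p‖ₑ :=
          (Real.enorm_of_nonneg (integral_nonneg (D_nonneg f))).symm
      _ ≤ ∫⁻ p, ‖D f p‖ₑ := enorm_integral_le_lintegral_enorm _
      _ ≤ K * ∫⁻ p, ‖D g p‖ₑ := by simpa only [enorm_D] using h
      _ = ENNReal.ofReal (K * ∫ p, D g p) := by
          rw [ENNReal.ofReal_mul K.coe_nonneg, ENNReal.ofReal_coe_nnreal,
            ofReal_integral_eq_lintegral_ofReal hg (.of_forall (D_nonneg g))]
          simp only [Real.enorm_of_nonneg (D_nonneg g _), D]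
  calc bourgainNorm ω b s f ≤ (K * ∫ p, D g p) ^ ((1 : ℝ) / 2) :=
        Real.rpow_le_rpow (integral_nonneg (D_nonneg f)) energy_le (by norm_num)
    _ = (K : ℝ) ^ ((1 : ℝ) / 2) * bourgainNorm ω b s g :=
        Real.mul_rpow K.coe_nonneg energy_nonneg

lemma TimeCutoff.exists_schwartz {ψ : ℝ → ℝ} (hψ : TimeCutoff ψ) :
    ∃ Ψ : 𝓢(ℝ, ℂ), ∀ t, Ψ t = ψ t := by
  have compact_support : HasCompactSupport fun t => (ψ t : ℂ) :=
    .of_support_subset_isCompact (isCompact_Icc (a := (-1 : ℝ)) (b := 1)) fun t ht =>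
      abs_le.1 (hψ.supp t (Complex.ofReal_ne_zero.1 ht))
  exact ⟨compact_support.toSchwartzMap (Complex.ofRealCLM.contDiff.comp hψ.smooth), fun _ => rfl⟩

end CutoffEstimate

theorem statement16_general {b : ℝ} (hb : b ∈ Set.Ico 0 (1 / 2)) (ψ : 𝓢(ℝ, ℂ)) :
    ∃ C > 0, ∀ ω : ℝ → ℝ, Measurable ω → HasPolynomialGrowth ω → ∀ s δ : ℝ, δ ≠ 0 →
      ∀ f : 𝓢(ℝ × ℝ, ℂ),
        bourgainNorm ω b s (fun p => ψ (p.2 / δ) * f p) ≤ C * bourgainNorm ω b s f := by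
  obtain ⟨K, hK⟩ := exists_lintegral_bourgainWeight_mul_sq_average_le hb (𝓕 ψ)
  refine ⟨((K + 1 : ℝ≥0) : ℝ) ^ ((1 : ℝ) / 2), by positivity, fun ω hωm hω s δ hδ f => ?_⟩
  have hr : 2 * Real.pi / δ ≠ 0 := div_ne_zero Real.two_pi_pos.ne' hδ
  obtain ⟨Φ, hΦ⟩ := exists_schwartz_FT2 f
  refine bourgainNorm_le_of_lintegral_le
    (integrable_bourgainWeight_mul_sq_norm_FT2 hωm hω f) ?_
  have FT2_le_average (p : ℝ × ℝ) : ‖FT2 (fun p => ψ (p.2 / δ) * f p) p.1 p.2‖ₑ ≤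
      ∫⁻ v, ‖(𝓕 ψ : 𝓢(ℝ, ℂ)) v‖ₑ * ‖Φ (p + (0, 2 * Real.pi / δ * v))‖ₑ := by
    rw [FT2_time_dilate_mul ψ f.integrable]
    refine (enorm_integral_le_lintegral_enorm _).trans_eq ?_
    simp only [enorm_mul, hΦ, Prod.fst_add, Prod.snd_add, add_zero]
  simp only [← hΦ]
  calc _ ≤ ∫⁻ p, ‖bourgainWeight ω b s p‖ₑ *
          (∫⁻ v, ‖(𝓕 ψ : 𝓢(ℝ, ℂ)) v‖ₑ * ‖Φ (p + (0, 2 * Real.pi / δ * v))‖ₑ) ^ 2 := by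
        gcongr with p
        exact FT2_le_average p
    _ ≤ K * ∫⁻ p, ‖bourgainWeight ω b s p‖ₑ * ‖Φ p‖ₑ ^ 2 :=
        hK ω hωm s _ hr _ Φ.continuous.enorm.measurable
    _ ≤ (K + 1 : ℝ≥0) * ∫⁻ p, ‖bourgainWeight ω b s p‖ₑ * ‖Φ p‖ₑ ^ 2 := by
        gcongr
        exact le_self_add

theorem statement16 (a : ℝ) (ha : a ∈ Set.Ioo (0 : ℝ) 1) (s : ℝ)
    (b : ℝ) (hb : b ∈ Set.Ioo (0 : ℝ) (1 / 2))
    (ψ : ℝ → ℝ) (hψ : TimeCutoff ψ) :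
    ∃ C > 0, ∀ δ ∈ Set.Ioo (0 : ℝ) 1, ∀ f : SchwartzMap (ℝ × ℝ) ℂ,
      XtildeNorm a b s (fun p : ℝ × ℝ => (ψ (p.2 / δ) : ℂ) * f p) ≤
        C * XtildeNorm a b s (fun p => f p) := by
  obtain ⟨Ψ, hΨ⟩ := hψ.exists_schwartz
  obtain ⟨C, hC, cutoff_le⟩ := statement16_general (Set.Ioo_subset_Ico_self hb) Ψ
  simp only [XtildeNorm_eq_bourgainNorm, ← hΨ]
  exact ⟨C, hC, fun δ hδ => cutoff_le (disp a) (measurable_disp a)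
    (hasPolynomialGrowth_disp (by linarith [ha.1])) s δ hδ.1.ne'⟩
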